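/- If X ⊆ 𝒜^∞ is a chain mixing shift space such that d̄_M^H(M_σ(X^M_n), M_σ(X)) → 0 as n → ∞, then X is d̄_M-stable. -/

import Mathlib

open MeasureTheory Filter Topology

namespace DbarPaper

variable {A : Type} [Fintype A] [DecidableEq A] [Inhabited A]
  [TopologicalSpace A] [DiscreteTopology A]
  [MeasurableSpace A] [MeasurableSingletonClass A]

/-- The shift map on the full shift `𝒜^∞ = ℕ → A`. -/
def shift : (ℕ → A) → (ℕ → A) := fun x n => x (n + 1)

/-- A shift space: a nonempty, closed, shift-invariant subset of the full shift. -/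
def ShiftSpace (X : Set (ℕ → A)) : Prop :=
  X.Nonempty ∧ IsClosed X ∧ ∀ x ∈ X, shift x ∈ X

/-- The word `w` appears in the sequence `x`. -/
def occursIn (w : List A) (x : ℕ → A) : Prop :=
  ∃ i : ℕ, w = List.ofFn (fun k : Fin w.length => x (i + (k : ℕ)))

/-- The language of a set `X`: all finite words appearing in points of `X`. -/
def lang (X : Set (ℕ → A)) : Set (List A) := {w | ∃ x ∈ X, occursIn w x}

/-- Words of length `n` in the language of `X`. -/
def langN (n : ℕ) (X : Set (ℕ → A)) : Set (List A) := {w | w ∈ lang X ∧ w.length = n}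

/-- The pseudometric `d̄` on the full shift. -/
noncomputable def dbar (x y : ℕ → A) : ℝ :=
  Filter.limsup
    (fun n => (((Finset.range n).filter (fun j => x j ≠ y j)).card : ℝ) / (n : ℝ))
    Filter.atTop

/-- Hausdorff "distance" between two sets induced by a `ℝ`-valued distance. -/
noncomputable def hausdist {Z : Type*} (d : Z → Z → ℝ) (P Q : Set Z) : ℝ :=
  max (⨆ p : P, ⨅ q : Q, d p q) (⨆ q : Q, ⨅ p : P, d p q)

/-- A probability measure is shift-invariant. -/
def invariantPM (μ : ProbabilityMeasure (ℕ → A)) : Prop :=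
  (μ : Measure (ℕ → A)).map shift = (μ : Measure (ℕ → A))

/-- `M_σ(X)`: shift-invariant Borel probability measures giving `X` full measure. -/
def Msigma (X : Set (ℕ → A)) : Set (ProbabilityMeasure (ℕ → A)) :=
  {μ | invariantPM μ ∧ μ X = 1}

/-- `ξ` is a joining of `μ` and `ν`: a `σ×σ`-invariant measure on the product with
marginals `μ` and `ν`. -/
def IsJoining (ξ : Measure ((ℕ → A) × (ℕ → A))) (μ ν : ProbabilityMeasure (ℕ → A)) : Prop :=
  ξ.map (Prod.map shift shift) = ξ ∧
  ξ.map Prod.fst = (μ : Measure (ℕ → A)) ∧ ξ.map Prod.snd = (ν : Measure (ℕ → A))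

/-- Ornstein's metric `d̄_M` on invariant measures. -/
noncomputable def dbarM (μ ν : ProbabilityMeasure (ℕ → A)) : ℝ :=
  sInf {r : ℝ | ∃ ξ : Measure ((ℕ → A) × (ℕ → A)),
    IsJoining ξ μ ν ∧ r = (ξ {p | p.1 0 ≠ p.2 0}).toReal}

/-- `d̄_M`-stability of a shift space (Austin). -/
def DbarMStable (X : Set (ℕ → A)) : Prop :=
  ∀ ε : ℝ, 0 < ε → ∃ U : Set (ProbabilityMeasure (ℕ → A)), IsOpen U ∧ Msigma X ⊆ U ∧
    ∀ ν ∈ U, invariantPM ν → ∃ μ ∈ Msigma X, dbarM μ ν < ε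

/-- The infinite concatenation of a sequence of (nonempty) words. -/
def concatSeq (w : ℕ → List A) : ℕ → A := fun n =>
  ((List.ofFn (fun i : Fin (n + 1) => w (i : ℕ))).flatten).getD n default

/-- The `d̄`-shadowing property. -/
def DbarShadowing (X : Set (ℕ → A)) : Prop :=
  ∀ ε : ℝ, 0 < ε → ∃ N : ℕ, 0 < N ∧ ∀ w : ℕ → List A,
    (∀ j, w j ∈ lang X) → (∀ j, N ≤ (w j).length) →
    ∃ x' ∈ X, dbar (concatSeq w) x' < ε

/-- `U_n(X)`: the union of cylinders of words of length `n` in the language of `X`. -/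
def cylNbhd (X : Set (ℕ → A)) (n : ℕ) : Set (ℕ → A) :=
  {x | List.ofFn (fun k : Fin n => x (k : ℕ)) ∈ lang X}

/-- The `n`-th (topological) Markov approximation of `X`: all sequences whose subwords of
length `n+1` belong to the language of `X`. -/
def markovApprox (X : Set (ℕ → A)) (n : ℕ) : Set (ℕ → A) :=
  {x | ∀ i : ℕ, List.ofFn (fun k : Fin (n + 1) => x (i + (k : ℕ))) ∈ lang X}

/-- Transitivity, in terms of the language. -/
def TransitiveShift (X : Set (ℕ → A)) : Prop :=
  ∀ u ∈ lang X, ∀ w ∈ lang X, ∃ v : List A, u ++ v ++ w ∈ lang X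

/-- Topological mixing, in terms of the language. -/
def MixingShift (X : Set (ℕ → A)) : Prop :=
  ∀ u ∈ lang X, ∀ w ∈ lang X, ∃ N : ℕ, ∀ m : ℕ, N ≤ m →
    ∃ v : List A, v.length = m ∧ u ++ v ++ w ∈ lang X

/-- Chain mixing: all but finitely many Markov approximations are topologically mixing. -/
def ChainMixing (X : Set (ℕ → A)) : Prop :=
  ∃ N : ℕ, ∀ n : ℕ, N ≤ n → MixingShift (markovApprox X n)

/-- `C` is the measure center of `X`: the smallest shift space contained in `X` of full
measure for every invariant measure of `X`. -/
def IsMeasureCenter (X C : Set (ℕ → A)) : Prop :=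
  ShiftSpace C ∧ C ⊆ X ∧ (∀ μ ∈ Msigma X, μ C = 1) ∧
  ∀ Y : Set (ℕ → A), ShiftSpace Y → Y ⊆ X → (∀ μ ∈ Msigma X, μ Y = 1) → C ⊆ Y

/-- Measure of the cylinder determined by a word of length `n`. -/
noncomputable def cylMeasure (μ : ProbabilityMeasure (ℕ → A)) {n : ℕ} (w : Fin n → A) : ℝ :=
  ((μ : Measure (ℕ → A)) {x | ∀ k : Fin n, x (k : ℕ) = w k}).toReal

/-- Entropy of the partition into cylinders of length `n`. -/
noncomputable def blockEntropy (μ : ProbabilityMeasure (ℕ → A)) (n : ℕ) : ℝ :=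
  -∑ w : Fin n → A, cylMeasure μ w * Real.log (cylMeasure μ w)

/-- Kolmogorov–Sinai entropy of a shift-invariant measure. -/
noncomputable def ksEntropy (μ : ProbabilityMeasure (ℕ → A)) : ℝ :=
  Filter.limsup (fun n => blockEntropy μ n / (n : ℝ)) Filter.atTop

/-- `μ` is ergodic for the shift. -/
def ErgodicPM (μ : ProbabilityMeasure (ℕ → A)) : Prop :=
  Ergodic shift (μ : Measure (ℕ → A))

/-- Ergodic measures are entropy dense in `M_σ(X)`. -/
def EntropyDense (X : Set (ℕ → A)) : Prop :=
  ∀ μ ∈ Msigma X, ∀ U : Set (ProbabilityMeasure (ℕ → A)), IsOpen U → μ ∈ U →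
    ∀ ε : ℝ, 0 < ε →
      ∃ ν ∈ Msigma X, ν ∈ U ∧ ErgodicPM ν ∧ |ksEntropy ν - ksEntropy μ| < ε

/-- Topological entropy of a shift space. -/
noncomputable def topEntropy (X : Set (ℕ → A)) : ℝ :=
  Filter.limsup (fun n => Real.log (Nat.card ↥(langN n X)) / (n : ℝ)) Filter.atTop

/-- The standard metric on the full shift. -/
noncomputable def rho (x y : ℕ → A) : ℝ :=
  open scoped Classical in
  if x = y then 0 else (2 : ℝ) ^ (-((sInf {j : ℕ | x j ≠ y j} : ℕ) : ℤ))

/-- Proximality of a shift space. -/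
def ProximalShift (X : Set (ℕ → A)) : Prop :=
  ∀ x ∈ X, ∀ y ∈ X,
    Filter.liminf (fun n => rho (shift^[n] x) (shift^[n] y)) Filter.atTop = 0

/-- Minimality of a shift space. -/
def MinimalShift (X : Set (ℕ → A)) : Prop :=
  ShiftSpace X ∧ ∀ Y : Set (ℕ → A), ShiftSpace Y → Y ⊆ X → Y = X

/-- An `A`-labeled directed multigraph on vertices `V` with edges `E`. -/
structure LabeledGraph (A V E : Type*) where
  src : E → V
  dst : E → V
  lab : E → A

namespace LabeledGraph

variable {A' V E : Type*}

/-- `es` is a path in `G` from `u` to `v`. -/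
def PathFromTo (G : LabeledGraph A' V E) (es : List E) (u v : V) : Prop :=
  es.Chain' (fun e f => G.dst e = G.src f) ∧
  es.head?.map G.src = some u ∧ es.getLast?.map G.dst = some v

/-- `G` is strongly connected. -/
def StronglyConnected (G : LabeledGraph A' V E) : Prop :=
  ∀ u v : V, ∃ es : List E, G.PathFromTo es u v

/-- `d` is the period of `G`: the gcd of lengths of closed paths. -/
def HasPeriod (G : LabeledGraph A' V E) (d : ℕ) : Prop :=
  (∀ (es : List E) (u : V), G.PathFromTo es u u → d ∣ es.length) ∧
  ∀ d' : ℕ, (∀ (es : List E) (u : V), G.PathFromTo es u u → d' ∣ es.length) → d' ∣ d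

/-- `b` is a safe symbol for `G`. -/
def SafeSymbol (G : LabeledGraph A' V E) (b : A') : Prop :=
  ∀ e : E, ∃ e' : E, G.src e' = G.src e ∧ G.dst e' = G.dst e ∧ G.lab e' = b

/-- The shift space presented by the labeled graph `G`: labels read along infinite paths. -/
def presents (G : LabeledGraph A' V E) : Set (ℕ → A') :=
  {x | ∃ e : ℕ → E, (∀ j, G.dst (e j) = G.src (e (j + 1))) ∧ ∀ j, x j = G.lab (e j)}

end LabeledGraph

/-- The coupling of a family of labeled graphs: an edge labeled `a` from `v` to `v'` exists
iff each `G k` has an edge from `v k` to `v' k` labeled `a`. -/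
def coupling {A' : Type*} {n : ℕ} {V E : Fin n → Type*}
    (G : ∀ k, LabeledGraph A' (V k) (E k)) :
    LabeledGraph A' (∀ k, V k) {p : (∀ k, E k) × A' // ∀ k, (G k).lab (p.1 k) = p.2} where
  src p := fun k => (G k).src (p.1.1 k)
  dst p := fun k => (G k).dst (p.1.1 k)
  lab p := p.1.2

/-- Sofic shift spaces: those presented by some finite labeled graph. -/
def Sofic (X : Set (ℕ → A)) : Prop :=
  ∃ (V E : Type) (_ : Fintype V) (_ : Fintype E) (G : LabeledGraph A V E),
    X = G.presents

/-- The coded shift generated by a finite set of words `B`: the closure of the set of all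
shifts of infinite concatenations of words from `B`. -/
def codedShift (B : Finset (List A)) : Set (ℕ → A) :=
  closure {x | ∃ (b : ℕ → List A) (k : ℕ), (∀ i, b i ∈ B) ∧ x = shift^[k] (concatSeq b)}


set_option linter.unusedSectionVars false

section Average

variable {T T' : Type*} [MeasurableSpace T] [MeasurableSpace T']

/-- The Cesàro average of the first `m` push-forwards of `ξ` under iterates of `S`. -/
noncomputable def cesaro (S : T → T) (ξ : Measure T) (m : ℕ) : Measure T :=
  (m : ENNReal)⁻¹ • ∑ k ∈ Finset.range m, ξ.map S^[k]

theorem cesaro_apply {S : T → T} (hS : Measurable S) (ξ : Measure T) (m : ℕ) {s : Set T}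
    (hs : MeasurableSet s) :
    cesaro S ξ m s = (m : ENNReal)⁻¹ * ∑ k ∈ Finset.range m, ξ (S^[k] ⁻¹' s) := by
  simp only [cesaro, Measure.smul_apply, Measure.finsetSum_apply, smul_eq_mul]
  congr 1
  exact Finset.sum_congr rfl fun k _ => Measure.map_apply (hS.iterate k) hs

theorem cesaro_apply_eq_one {S : T → T} (hS : Measurable S) (ξ : Measure T)
    [IsProbabilityMeasure ξ] {m : ℕ} (hm : 0 < m) {s : Set T} (hs : MeasurableSet s)
    (h : ∀ k, ξ (S^[k] ⁻¹' s) = 1) : cesaro S ξ m s = 1 := by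
  rw [cesaro_apply hS ξ m hs, Finset.sum_congr rfl fun k _ => h k]
  simp only [Finset.sum_const, Finset.card_range, nsmul_eq_mul, mul_one]
  exact ENNReal.inv_mul_cancel (by exact_mod_cast hm.ne') (ENNReal.natCast_ne_top m)

theorem isProbabilityMeasure_cesaro {S : T → T} (hS : Measurable S) (ξ : Measure T)
    [IsProbabilityMeasure ξ] {m : ℕ} (hm : 0 < m) : IsProbabilityMeasure (cesaro S ξ m) :=
  ⟨cesaro_apply_eq_one hS ξ hm MeasurableSet.univ (by simp)⟩

theorem map_cesaro {S : T → T} {S' : T' → T'} (hS : Measurable S) (hS' : Measurable S')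
    {g : T → T'} (hg : Measurable g) (hgS : Function.Semiconj g S S') (ξ : Measure T) (m : ℕ) :
    (cesaro S ξ m).map g = cesaro S' (ξ.map g) m := by
  ext s hs
  rw [Measure.map_apply hg hs, cesaro_apply hS _ _ (hg hs), cesaro_apply hS' _ _ hs]
  congr 1
  refine Finset.sum_congr rfl fun k _ => ?_
  rw [Measure.map_apply hg (hS'.iterate k hs), ← Set.preimage_comp, ← Set.preimage_comp,
    (hgS.iterate_right k).comp_eq]

theorem map_iterate_eq {S : T → T} (hS : Measurable S) {ξ : Measure T} (h : ξ.map S = ξ) (k : ℕ) :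
    ξ.map S^[k] = ξ := by
  have hp : MeasurePreserving S ξ ξ := ⟨hS, h⟩
  exact (hp.iterate k).map_eq

theorem cesaro_eq_self {S : T → T} (hS : Measurable S) {ξ : Measure T} (h : ξ.map S = ξ)
    {m : ℕ} (hm : 0 < m) : cesaro S ξ m = ξ := by
  simp only [cesaro, map_iterate_eq hS h, Finset.sum_const, Finset.card_range]
  rw [← Nat.cast_smul_eq_nsmul ENNReal, smul_smul,
    ENNReal.inv_mul_cancel (by exact_mod_cast hm.ne') (ENNReal.natCast_ne_top m), one_smul]

theorem map_cesaro_of_map_iterate_eq {S : T → T} (hS : Measurable S) {ξ : Measure T}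
    [IsFiniteMeasure ξ] {m : ℕ}
    (h : ξ.map S^[m] = ξ) : (cesaro S ξ m).map S = cesaro S ξ m := by
  ext s hs
  rw [Measure.map_apply hS hs, cesaro_apply hS _ _ (hS hs), cesaro_apply hS _ _ hs]
  congr 1
  have hk : ∀ k, ξ (S^[k] ⁻¹' (S ⁻¹' s)) = ξ (S^[k + 1] ⁻¹' s) := fun k => by
    rw [← Set.preimage_comp, Function.iterate_succ']
  have h0 : ξ (S^[m] ⁻¹' s) = ξ (S^[0] ⁻¹' s) := by
    rw [← Measure.map_apply (hS.iterate m) hs, h]; simp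
  have h1 := Finset.sum_range_succ (fun k => ξ (S^[k] ⁻¹' s)) m
  have h2 := Finset.sum_range_succ' (fun k => ξ (S^[k] ⁻¹' s)) m
  simp only [hk]
  rw [h1, ← h0] at h2
  exact ((ENNReal.add_left_inj (measure_ne_top _ _)).1 h2).symm

theorem integral_cesaro {S : T → T} (hS : Measurable S) (ξ : Measure T) [IsProbabilityMeasure ξ]
    (m : ℕ) {f : T → ℝ} (hf : Measurable f) {C : ℝ} (hC : ∀ x, ‖f x‖ ≤ C) :
    ∫ x, f x ∂(cesaro S ξ m) = (m : ℝ)⁻¹ * ∑ k ∈ Finset.range m, ∫ x, f (S^[k] x) ∂ξ := by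
  rw [cesaro, integral_smul_measure, integral_finsetSum_measure]
  · simp only [ENNReal.toReal_inv, ENNReal.toReal_natCast, smul_eq_mul]
    congr 1
    exact Finset.sum_congr rfl fun k _ =>
      integral_map (hS.iterate k).aemeasurable hf.aestronglyMeasurable
  · intro k _
    have := Measure.isProbabilityMeasure_map (μ := ξ) (hS.iterate k).aemeasurable
    exact Integrable.of_bound hf.aestronglyMeasurable C (ae_of_all _ hC)

end Average

section Limit

variable {T : Type*} [TopologicalSpace T] [CompactSpace T] [TopologicalSpace.MetrizableSpace T]
  [MeasurableSpace T] [BorelSpace T]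

/-- A Krylov–Bogolyubov limit of `ξ` keeps all already invariant continuous factors of `ξ`. -/
theorem exists_invariant_limit {S : T → T} (hS : Continuous S) (ξ : Measure T)
    [IsProbabilityMeasure ξ] :
    ∃ ζ : Measure T, IsProbabilityMeasure ζ ∧ ζ.map S = ζ ∧
      ∀ (T' : Type) [TopologicalSpace T'] [TopologicalSpace.MetrizableSpace T']
        [MeasurableSpace T'] [BorelSpace T'] (S' : T' → T') (g : T → T'),
        Measurable S' → Continuous g → Function.Semiconj g S S' →
        (ξ.map g).map S' = ξ.map g → ζ.map g = ξ.map g := by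
  let ξs : ℕ → ProbabilityMeasure T := fun m =>
    ⟨cesaro S ξ (m + 1), isProbabilityMeasure_cesaro hS.measurable ξ m.succ_pos⟩
  obtain ⟨ζ, -, hζ⟩ := isCompact_univ.ultrafilter_le_nhds
    ((hyperfilter ℕ).map ξs) (by simp)
  have hζ : Tendsto ξs (hyperfilter ℕ) (𝓝 ζ) := hζ
  have hat : (hyperfilter ℕ : Filter ℕ) ≤ atTop := by
    simpa [Nat.cofinite_eq_atTop] using hyperfilter_le_cofinite (α := ℕ)
  refine ⟨ζ, inferInstance, ?_, ?_⟩
  · have := Measure.isProbabilityMeasure_map (μ := (ζ : Measure T)) hS.aemeasurable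
    refine ext_of_forall_integral_eq_of_IsFiniteMeasure fun f => ?_
    rw [integral_map hS.aemeasurable f.continuous.aestronglyMeasurable]
    have h1 := (ProbabilityMeasure.tendsto_iff_forall_integral_tendsto.1 hζ)
      (f.compContinuous ⟨S, hS⟩)
    have h2 := (ProbabilityMeasure.tendsto_iff_forall_integral_tendsto.1 hζ) f
    have h3 : Tendsto (fun m => ∫ x, f (S x) ∂(ξs m : Measure T) - ∫ x, f x ∂(ξs m : Measure T))
        atTop (𝓝 0) := by
      have hb : Tendsto (fun m : ℕ => (((m : ℝ) + 1))⁻¹ * (2 * ‖f‖)) atTop (𝓝 0) := by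
        have := tendsto_one_div_add_atTop_nhds_zero_nat (𝕜 := ℝ)
        simpa using this.mul_const (2 * ‖f‖)
      refine squeeze_zero_norm (fun m => ?_) hb
      simp only [ξs, ProbabilityMeasure.coe_mk]
      rw [integral_cesaro hS.measurable ξ (m + 1) (f := fun x => f (S x))
          (f.continuous.comp hS).measurable (C := ‖f‖) (fun x => f.norm_coe_le_norm _),
        integral_cesaro hS.measurable ξ (m + 1) f.continuous.measurable
          (C := ‖f‖) (fun x => f.norm_coe_le_norm _), ← mul_sub, ← Finset.sum_sub_distrib]
      have hstep : ∀ k, ∫ x, f (S (S^[k] x)) ∂ξ = ∫ x, f (S^[k + 1] x) ∂ξ := fun k => by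
        simp only [Function.iterate_succ_apply']
      simp only [hstep]
      rw [Finset.sum_range_sub (fun k => ∫ x, f (S^[k] x) ∂ξ), norm_mul]
      have hle : ∀ k, ‖∫ x, f (S^[k] x) ∂ξ‖ ≤ ‖f‖ := fun k => by
        simpa using norm_integral_le_of_norm_le_const (μ := ξ)
          (ae_of_all _ fun x => f.norm_coe_le_norm (S^[k] x))
      have h4 := (norm_sub_le (∫ x, f (S^[m + 1] x) ∂ξ) (∫ x, f (S^[0] x) ∂ξ)).trans
        (add_le_add (hle (m + 1)) (hle 0))
      have h5 : ‖((m + 1 : ℕ) : ℝ)⁻¹‖ = ((m : ℝ) + 1)⁻¹ := by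
        rw [Real.norm_of_nonneg (by positivity)]; push_cast; rfl
      rw [h5]
      gcongr
      linarith
    have h4 := tendsto_nhds_unique (h1.sub h2) (h3.mono_left hat)
    exact sub_eq_zero.1 h4
  · intro T' _ _ _ _ S' g hS' hg hgS hinv
    have := Measure.isProbabilityMeasure_map (μ := (ζ : Measure T)) hg.aemeasurable
    have := Measure.isProbabilityMeasure_map (μ := ξ) hg.aemeasurable
    refine ext_of_forall_integral_eq_of_IsFiniteMeasure fun f => ?_
    have h1 := (ProbabilityMeasure.tendsto_iff_forall_integral_tendsto.1 hζ)
      (f.compContinuous ⟨g, hg⟩)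
    have h2 : ∀ m, ∫ x, (f.compContinuous ⟨g, hg⟩) x ∂(ξs m : Measure T)
        = ∫ y, f y ∂(ξ.map g) := fun m => by
      rw [← cesaro_eq_self hS' hinv m.succ_pos,
        ← map_cesaro hS.measurable hS' hg.measurable hgS,
        integral_map hg.aemeasurable f.continuous.aestronglyMeasurable]
      rfl
    simp only [h2] at h1
    rw [integral_map hg.aemeasurable f.continuous.aestronglyMeasurable]
    exact tendsto_nhds_unique h1 tendsto_const_nhds

end Limit

/-- Two couplings with a common middle marginal can be glued together. -/
theorem exists_gluing {T₁ T₂ T₃ : Type*} [MeasurableSpace T₁] [MeasurableSpace T₂]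
    [MeasurableSpace T₃] [StandardBorelSpace T₃] [Nonempty T₃]
    (ξ : Measure (T₁ × T₂)) (η : Measure (T₂ × T₃)) [IsProbabilityMeasure ξ]
    [IsProbabilityMeasure η] (h : ξ.map Prod.snd = η.map Prod.fst) :
    ∃ ζ : Measure ((T₁ × T₂) × T₃), IsProbabilityMeasure ζ ∧ ζ.map Prod.fst = ξ ∧
      ζ.map (fun p => (p.1.2, p.2)) = η := by
  refine ⟨ξ.compProd (η.condKernel.comap Prod.snd measurable_snd), inferInstance, ?_, ?_⟩
  · exact Measure.fst_compProd _ _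
  · ext s hs
    have hg : Measurable (fun p : (T₁ × T₂) × T₃ => (p.1.2, p.2)) := by fun_prop
    rw [Measure.map_apply hg hs, Measure.compProd_apply (hg hs)]
    conv_rhs => rw [← η.disintegrate η.condKernel, Measure.compProd_apply hs, Measure.fst, ← h,
      lintegral_map (ProbabilityTheory.Kernel.measurable_kernel_prodMk_left hs) measurable_snd]
    rfl

theorem measurable_shift : Measurable (shift : (ℕ → A) → (ℕ → A)) :=
  measurable_pi_lambda _ fun n => measurable_pi_apply (n + 1)

theorem continuous_shift : Continuous (shift : (ℕ → A) → (ℕ → A)) :=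
  continuous_pi fun n => continuous_apply (n + 1)

theorem shift_iterate (k : ℕ) (x : ℕ → A) : shift^[k] x = fun j => x (j + k) := by
  induction k generalizing x with
  | zero => rfl
  | succ k ih =>
    rw [Function.iterate_succ_apply, ih]
    funext j
    simp [shift, add_assoc]

theorem shift_iterate_apply (k : ℕ) (x : ℕ → A) (j : ℕ) : shift^[k] x j = x (j + k) := by
  rw [shift_iterate]

theorem prod_invariant {T : Type*} [MeasurableSpace T] (μ ν : Measure T)
    [IsProbabilityMeasure μ] [IsProbabilityMeasure ν] {S : T → T} (hS : Measurable S)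
    (hμ : μ.map S = μ) (hν : ν.map S = ν) :
    (μ.prod ν).map (Prod.map S S) = μ.prod ν ∧ (μ.prod ν).map Prod.fst = μ ∧
      (μ.prod ν).map Prod.snd = ν := by
  refine ⟨?_, Measure.fst_prod, Measure.snd_prod⟩
  rw [← Measure.map_prod_map _ _ hS hS, hμ, hν]

section Joining

theorem IsJoining.isProbabilityMeasure {ξ : Measure ((ℕ → A) × (ℕ → A))}
    {μ ν : ProbabilityMeasure (ℕ → A)} (h : IsJoining ξ μ ν) : IsProbabilityMeasure ξ := by
  refine ⟨?_⟩
  have := congrArg (fun m => m Set.univ) h.2.1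
  simpa [Measure.map_apply measurable_fst] using this

theorem isJoining_prod {μ ν : ProbabilityMeasure (ℕ → A)} (hμ : invariantPM μ)
    (hν : invariantPM ν) :
    IsJoining ((μ : Measure (ℕ → A)).prod (ν : Measure (ℕ → A))) μ ν :=
  prod_invariant _ _ measurable_shift hμ hν

theorem measurableSet_zero_ne : MeasurableSet {p : (ℕ → A) × (ℕ → A) | p.1 0 ≠ p.2 0} :=
  (measurableSet_eq_fun (by fun_prop) (by fun_prop)).compl

theorem bddBelow_joining (μ ν : ProbabilityMeasure (ℕ → A)) :
    BddBelow {r : ℝ | ∃ ξ : Measure ((ℕ → A) × (ℕ → A)),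
      IsJoining ξ μ ν ∧ r = (ξ {p | p.1 0 ≠ p.2 0}).toReal} :=
  ⟨0, by rintro r ⟨ξ, -, rfl⟩; exact ENNReal.toReal_nonneg⟩

theorem dbarM_le {μ ν : ProbabilityMeasure (ℕ → A)} {ξ : Measure ((ℕ → A) × (ℕ → A))}
    (h : IsJoining ξ μ ν) : dbarM μ ν ≤ (ξ {p | p.1 0 ≠ p.2 0}).toReal :=
  csInf_le (bddBelow_joining μ ν) ⟨ξ, h, rfl⟩

theorem dbarM_nonneg (μ ν : ProbabilityMeasure (ℕ → A)) : 0 ≤ dbarM μ ν :=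
  Real.sInf_nonneg (by rintro r ⟨ξ, -, rfl⟩; exact ENNReal.toReal_nonneg)

theorem dbarM_le_one {μ ν : ProbabilityMeasure (ℕ → A)} (hμ : invariantPM μ)
    (hν : invariantPM ν) : dbarM μ ν ≤ 1 :=
  (dbarM_le (isJoining_prod hμ hν)).trans measureReal_le_one

theorem exists_joining_of_dbarM_lt {μ ν : ProbabilityMeasure (ℕ → A)} (hμ : invariantPM μ)
    (hν : invariantPM ν) {r : ℝ} (h : dbarM μ ν < r) :
    ∃ ξ, IsJoining ξ μ ν ∧ (ξ {p | p.1 0 ≠ p.2 0}).toReal < r := by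
  obtain ⟨_, ⟨ξ, hξ, rfl⟩, hr⟩ :=
    (csInf_lt_iff (bddBelow_joining μ ν) ⟨_, _, isJoining_prod hμ hν, rfl⟩).1 h
  exact ⟨ξ, hξ, hr⟩

theorem dbarM_lt_symm {μ ν : ProbabilityMeasure (ℕ → A)} (hμ : invariantPM μ)
    (hν : invariantPM ν) {r : ℝ} (h : dbarM μ ν < r) : dbarM ν μ < r := by
  obtain ⟨ξ, hξ, hr⟩ := exists_joining_of_dbarM_lt hμ hν h
  have hm : Measurable (Prod.map (shift (A := A)) (shift (A := A))) :=
    measurable_shift.prodMap measurable_shift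
  have hj : IsJoining (ξ.map Prod.swap) ν μ := by
    refine ⟨?_, ?_, ?_⟩
    · conv_rhs => rw [← hξ.1]
      rw [Measure.map_map hm measurable_swap, Measure.map_map measurable_swap hm]
      rfl
    · rw [Measure.map_map measurable_fst measurable_swap]
      exact hξ.2.2
    · rw [Measure.map_map measurable_snd measurable_swap]
      exact hξ.2.1
  refine (dbarM_le hj).trans_lt ?_
  rw [Measure.map_apply measurable_swap measurableSet_zero_ne]
  have he : (Prod.swap ⁻¹' {p : (ℕ → A) × (ℕ → A) | p.1 0 ≠ p.2 0}) = {p | p.1 0 ≠ p.2 0} := by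
    ext p
    simp [ne_comm]
  rwa [he]

theorem dbarM_lt_add {μ₁ μ₂ μ₃ : ProbabilityMeasure (ℕ → A)} (h₁ : invariantPM μ₁)
    (h₂ : invariantPM μ₂) (h₃ : invariantPM μ₃) {a b : ℝ} (h₁₂ : dbarM μ₁ μ₂ < a)
    (h₂₃ : dbarM μ₂ μ₃ < b) : dbarM μ₁ μ₃ < a + b := by
  obtain ⟨ξ, hξ, ha⟩ := exists_joining_of_dbarM_lt h₁ h₂ h₁₂
  obtain ⟨η, hη, hb⟩ := exists_joining_of_dbarM_lt h₂ h₃ h₂₃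
  have := hξ.isProbabilityMeasure
  have := hη.isProbabilityMeasure
  obtain ⟨ζ₀, _, hζ₁, hζ₂⟩ := exists_gluing ξ η (hξ.2.2.trans hη.2.1.symm)
  let S : ((ℕ → A) × (ℕ → A)) × (ℕ → A) → ((ℕ → A) × (ℕ → A)) × (ℕ → A) :=
    Prod.map (Prod.map shift shift) shift
  have hS : Continuous S := (continuous_shift.prodMap continuous_shift).prodMap continuous_shift
  have hm : Measurable (Prod.map (shift (A := A)) (shift (A := A))) :=
    measurable_shift.prodMap measurable_shift
  obtain ⟨ζ, _, hζS, hζ⟩ := exists_invariant_limit hS ζ₀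
  have e₁₂ : ζ.map Prod.fst = ξ := by
    rw [hζ _ _ _ hm continuous_fst (fun _ => rfl) (by rw [hζ₁, hξ.1]), hζ₁]
  have e₂₃ : ζ.map (fun p => (p.1.2, p.2)) = η := by
    rw [hζ _ _ (fun p => (p.1.2, p.2)) hm (by fun_prop) (fun _ => rfl) (by rw [hζ₂, hη.1]), hζ₂]
  have hg : Measurable (fun p : ((ℕ → A) × (ℕ → A)) × (ℕ → A) => (p.1.1, p.2)) := by fun_prop
  have hg' : Measurable (fun p : ((ℕ → A) × (ℕ → A)) × (ℕ → A) => (p.1.2, p.2)) := by fun_prop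
  have hj : IsJoining (ζ.map (fun p => (p.1.1, p.2))) μ₁ μ₃ := by
    refine ⟨?_, ?_, ?_⟩
    · conv_rhs => rw [← hζS]
      rw [Measure.map_map hm hg, Measure.map_map hg hS.measurable]
      rfl
    · rw [Measure.map_map measurable_fst hg, ← hξ.2.1, ← e₁₂,
        Measure.map_map measurable_fst measurable_fst]
      rfl
    · rw [Measure.map_map measurable_snd hg, ← hη.2.2, ← e₂₃,
        Measure.map_map measurable_snd hg']
      rfl
  refine (dbarM_le hj).trans_lt ((?_ : _ ≤ _).trans_lt (add_lt_add ha hb))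
  rw [← e₁₂, ← e₂₃, Measure.map_apply hg measurableSet_zero_ne,
    Measure.map_apply measurable_fst measurableSet_zero_ne,
    Measure.map_apply hg' measurableSet_zero_ne]
  refine (measureReal_mono (μ := ζ) ?_).trans (measureReal_union_le _ _)
  intro p hp
  by_contra hcon
  simp only [Set.mem_union, Set.mem_preimage, Set.mem_ofPred_eq, not_or, not_not] at hcon hp
  exact hp (hcon.1.trans hcon.2)

theorem exists_lt_of_hausdist_lt {X Y : Set (ℕ → A)} (hX : (Msigma X).Nonempty) {r : ℝ}
    (h : hausdist dbarM (Msigma Y) (Msigma X) < r) {p : ProbabilityMeasure (ℕ → A)}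
    (hp : p ∈ Msigma Y) : ∃ q ∈ Msigma X, dbarM p q < r := by
  have : Nonempty (Msigma X) := hX.to_subtype
  have hb : ∀ p : ProbabilityMeasure (ℕ → A),
      BddBelow (Set.range fun q : Msigma X => dbarM p q.1) := fun p =>
    ⟨0, by rintro _ ⟨q, rfl⟩; exact dbarM_nonneg _ _⟩
  have hB : BddAbove (Set.range fun p : Msigma Y => ⨅ q : Msigma X, dbarM p.1 q.1) := by
    refine ⟨1, ?_⟩
    rintro _ ⟨p, rfl⟩
    exact (ciInf_le (hb p) ⟨hX.some, hX.some_mem⟩).trans (dbarM_le_one p.2.1 hX.some_mem.1)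
  have h1 := (le_ciSup hB ⟨p, hp⟩).trans_lt ((le_max_left _ _).trans_lt h)
  obtain ⟨q, hq⟩ := exists_lt_of_ciInf_lt h1
  exact ⟨q, q.2, hq⟩

end Joining

section Correction

/-- The window of length `n + 1` of `x` at position `i` belongs to the language of `X`. -/
def AllowedAt (X : Set (ℕ → A)) (n : ℕ) (x : ℕ → A) (i : ℕ) : Prop :=
  List.ofFn (fun k : Fin (n + 1) => x (i + (k : ℕ))) ∈ lang X

theorem allowedAt_congr {X : Set (ℕ → A)} {n i j : ℕ} {x y : ℕ → A}
    (h : ∀ k < n + 1, x (i + k) = y (j + k)) : AllowedAt X n x i ↔ AllowedAt X n y j := by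
  have : (fun k : Fin (n + 1) => x (i + (k : ℕ))) = fun k : Fin (n + 1) => y (j + (k : ℕ)) :=
    funext fun k => h k k.2
  rw [AllowedAt, AllowedAt, this]

theorem occursIn_iff {w : List A} {x : ℕ → A} :
    occursIn w x ↔ ∃ i, ∀ (k : ℕ) (hk : k < w.length), w[k] = x (i + k) := by
  refine exists_congr fun i => ⟨fun h k hk => ?_, fun h => ?_⟩
  · have := List.getElem_of_eq h hk
    simpa using this
  · exact List.ext_getElem (by simp) fun k h₁ h₂ => by simpa using h k h₁

theorem ofFn_mem_lang {X : Set (ℕ → A)} {x : ℕ → A} (hx : x ∈ X) (m i : ℕ) :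
    List.ofFn (fun k : Fin m => x (i + (k : ℕ))) ∈ lang X :=
  ⟨x, hx, occursIn_iff.2 ⟨i, fun k hk => by simp⟩⟩

theorem lang_subset_lang_markovApprox (X : Set (ℕ → A)) (n : ℕ) :
    lang X ⊆ lang (markovApprox X n) := by
  rintro w ⟨x, hx, hw⟩
  exact ⟨x, fun i => ofFn_mem_lang hx _ i, hw⟩

theorem measurableSet_allowedAt (X : Set (ℕ → A)) (n i : ℕ) :
    MeasurableSet {x | AllowedAt X n x i} := by
  have hm : Measurable (fun (x : ℕ → A) (k : Fin (n + 1)) => x (i + (k : ℕ))) := by fun_prop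
  exact hm (MeasurableSet.of_discrete (s := {u : Fin (n + 1) → A | List.ofFn u ∈ lang X}))

theorem isClopen_allowedAt (X : Set (ℕ → A)) (n i : ℕ) : IsClopen {x | AllowedAt X n x i} := by
  have hc : Continuous (fun (x : ℕ → A) (k : Fin (n + 1)) => x (i + (k : ℕ))) := by fun_prop
  exact (isClopen_discrete {u : Fin (n + 1) → A | List.ofFn u ∈ lang X}).preimage hc

theorem measurableSet_markovApprox (X : Set (ℕ → A)) (n : ℕ) :
    MeasurableSet (markovApprox X n) := by
  have : markovApprox X n = ⋂ i, {x | AllowedAt X n x i} := by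
    ext x
    simp [markovApprox, AllowedAt]
  rw [this]
  exact MeasurableSet.iInter fun i => measurableSet_allowedAt X n i

theorem shift_iterate_mem_markovApprox {X : Set (ℕ → A)} {n : ℕ} {x : ℕ → A}
    (hx : x ∈ markovApprox X n) (k : ℕ) : shift^[k] x ∈ markovApprox X n := by
  intro i
  refine (allowedAt_congr (y := x) (j := i + k) fun t _ => ?_).2 (hx (i + k))
  rw [shift_iterate_apply]
  congr 1
  omega

/-- In a mixing Markov approximation all pairs of allowed windows can be connected with a
common gap length. -/
theorem exists_uniform_gap {X : Set (ℕ → A)} {n : ℕ} (hmix : MixingShift (markovApprox X n)) :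
    ∃ (L : ℕ) (Z : (Fin (n + 1) → A) → (Fin (n + 1) → A) → ℕ → A),
      ∀ u w, List.ofFn u ∈ lang X → List.ofFn w ∈ lang X →
        (∀ k : Fin (n + 1), Z u w k = u k) ∧
        (∀ k : Fin (n + 1), Z u w (n + 1 + L + k) = w k) ∧ ∀ i, AllowedAt X n (Z u w) i := by
  have key : ∀ u w : Fin (n + 1) → A, ∃ N, ∀ L, N ≤ L → ∃ z : ℕ → A,
      List.ofFn u ∈ lang X → List.ofFn w ∈ lang X →
        (∀ k : Fin (n + 1), z k = u k) ∧
        (∀ k : Fin (n + 1), z (n + 1 + L + k) = w k) ∧ ∀ i, AllowedAt X n z i := by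
    intro u w
    by_cases huw : List.ofFn u ∈ lang X ∧ List.ofFn w ∈ lang X
    swap
    · exact ⟨0, fun L _ => ⟨default, fun hu hw => (huw ⟨hu, hw⟩).elim⟩⟩
    obtain ⟨N, hN⟩ := hmix _ (lang_subset_lang_markovApprox X n huw.1) _
      (lang_subset_lang_markovApprox X n huw.2)
    refine ⟨N, fun L hL => ?_⟩
    obtain ⟨v, hv, x, hx, hocc⟩ := hN L hL
    obtain ⟨i, hi⟩ := occursIn_iff.1 hocc
    have hlen : (List.ofFn u ++ v ++ List.ofFn w).length = n + 1 + L + (n + 1) := by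
      simp only [List.length_append, List.length_ofFn, hv]
    refine ⟨fun j => x (i + j), fun _ _ => ⟨fun k => ?_, fun k => ?_, fun j => ?_⟩⟩
    · show x (i + k) = u k
      rw [← hi k (by omega), List.getElem_append_left (by simp only [List.length_append, List.length_ofFn]; omega),
        List.getElem_append_left (by simp only [List.length_ofFn, k.2]), List.getElem_ofFn]
    · show x (i + (n + 1 + L + k)) = w k
      rw [← hi (n + 1 + L + k) (by omega), List.getElem_append_right (by simp only [List.length_append, List.length_ofFn]; omega),
        List.getElem_ofFn]
      congr 1
      ext
      simp only [List.length_append, List.length_ofFn, hv]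
      omega
    · exact (allowedAt_congr (y := x) (j := i + j) fun t _ => by
        simp only [add_assoc]).2 (hx (i + j))
  choose N hN using key
  let L := Finset.univ.sup fun p : (Fin (n + 1) → A) × (Fin (n + 1) → A) => N p.1 p.2
  have hL : ∀ u w, N u w ≤ L := fun u w =>
    Finset.le_sup (f := fun p : (Fin (n + 1) → A) × (Fin (n + 1) → A) => N p.1 p.2)
      (Finset.mem_univ (u, w))
  choose Z hZ using fun u w => hN u w L (hL u w)
  exact ⟨L, Z, hZ⟩

/-- A measurable block code into a mixing Markov approximation, leaving the first `P` symbols of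
each block of length `P + L` untouched whenever they contain no forbidden window. -/
theorem exists_blockCode {X : Set (ℕ → A)} (hX : ShiftSpace X) {n : ℕ}
    (hmix : MixingShift (markovApprox X n)) :
    ∃ L, ∀ P, n + 1 ≤ P → ∃ φ : (ℕ → A) → ℕ → A, Measurable φ ∧
      (∀ x, φ (shift^[P + L] x) = shift^[P + L] (φ x)) ∧ (∀ x, φ x ∈ markovApprox X n) ∧
      ∀ x, (∀ i, i + (n + 1) ≤ P → AllowedAt X n x i) → ∀ j < P, φ x j = x j := by
  classical
  obtain ⟨L, Z, hZ⟩ := exists_uniform_gap hmix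
  refine ⟨L, fun P hP => ?_⟩
  obtain ⟨x₀, hx₀⟩ := hX.1
  obtain ⟨b, hbm, hb, hbx⟩ : ∃ b : (ℕ → A) → ℕ → A, Measurable b ∧
      (∀ x i, i + (n + 1) ≤ P → AllowedAt X n (b x) i) ∧
      ∀ x, (∀ i, i + (n + 1) ≤ P → AllowedAt X n x i) → b x = x := by
    refine ⟨fun x => if ∀ i, i + (n + 1) ≤ P → AllowedAt X n x i then x else x₀, ?_, ?_, ?_⟩
    · refine Measurable.ite ?_ measurable_id measurable_const
      simp only [Set.ofPred_forall]
      exact MeasurableSet.iInter fun i => MeasurableSet.iInter fun _ =>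
        measurableSet_allowedAt X n i
    · intro x i hi
      dsimp only
      split_ifs with h
      · exact h i hi
      · exact ofFn_mem_lang hx₀ _ i
    · intro x h
      exact if_pos h
  let z : (ℕ → A) → ℕ → A := fun x =>
    Z (fun k => b x (P - (n + 1) + k)) (fun k => b (shift^[P + L] x) k)
  have hz : ∀ x, (∀ k < n + 1, z x k = b x (P - (n + 1) + k)) ∧
      (∀ k < n + 1, z x (n + 1 + L + k) = b (shift^[P + L] x) k) ∧
      ∀ i, AllowedAt X n (z x) i := by
    intro x
    obtain ⟨h₁, h₂, h₃⟩ := hZ (fun k => b x (P - (n + 1) + k))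
      (fun k => b (shift^[P + L] x) k) (hb x _ (by omega))
      (by simpa [AllowedAt] using hb (shift^[P + L] x) 0 (by omega))
    exact ⟨fun k hk => h₁ ⟨k, hk⟩, fun k hk => h₂ ⟨k, hk⟩, h₃⟩
  let R : (ℕ → A) → ℕ → A := fun x r => if r < P then b x r else z x (n + 1 + (r - P))
  have hRm : ∀ r, Measurable fun x => R x r := by
    intro r
    by_cases hr : r < P
    · simp only [R, if_pos hr]
      exact (measurable_pi_apply r).comp hbm
    · simp only [R, if_neg hr]
      have hG : Measurable fun p : (Fin (n + 1) → A) × (Fin (n + 1) → A) =>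
        Z p.1 p.2 (n + 1 + (r - P)) := Measurable.of_discrete
      have h₁ : Measurable fun (x : ℕ → A) (k : Fin (n + 1)) => b x (P - (n + 1) + k) :=
        measurable_pi_lambda _ fun k => (measurable_pi_apply _).comp hbm
      have h₂ : Measurable fun (x : ℕ → A) (k : Fin (n + 1)) => b (shift^[P + L] x) k :=
        measurable_pi_lambda _ fun k =>
          (measurable_pi_apply _).comp (hbm.comp (measurable_shift.iterate _))
      exact hG.comp (h₁.prodMk h₂)
  let φ : (ℕ → A) → ℕ → A := fun x j => R (shift^[(P + L) * (j / (P + L))] x) (j % (P + L))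
  have hPL : 0 < P + L := by omega
  have hφR : ∀ x, ∀ j < P + L, φ x j = R x j := by
    intro x j hj
    simp [φ, Nat.div_eq_of_lt hj, Nat.mod_eq_of_lt hj]
  have hφ : ∀ x, φ (shift^[P + L] x) = shift^[P + L] (φ x) := by
    intro x
    rw [shift_iterate (P + L) (φ x)]
    funext j
    simp only [φ]
    rw [Nat.add_div_right _ hPL, Nat.add_mod_right, ← Function.iterate_add_apply,
      Nat.mul_succ]
  have hφ' : ∀ q x, φ (shift^[(P + L) * q] x) = shift^[(P + L) * q] (φ x) := by
    intro q x
    rw [Function.iterate_mul]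
    exact (Function.Semiconj.iterate_right (f := φ) hφ q) x
  have hlow : ∀ x, ∀ j < P, φ x j = b x j := by
    intro x j hj
    rw [hφR x j (by omega)]
    exact if_pos hj
  have hallow : ∀ x, ∀ r < P + L, AllowedAt X n (φ x) r := by
    intro x r hr
    by_cases h : r + (n + 1) ≤ P
    · exact (allowedAt_congr fun k hk => hlow x _ (by omega)).2 (hb x r h)
    · refine (allowedAt_congr (y := z x) (j := r - (P - (n + 1))) fun k hk => ?_).2 ((hz x).2.2 _)
      rcases lt_or_ge (r + k) P with h₁ | h₁
      · rw [hlow x _ h₁, (hz x).1 _ (by omega)]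
        congr 1
        omega
      rcases lt_or_ge (r + k) (P + L) with h₂ | h₂
      · rw [hφR x _ h₂]
        simp only [R, if_neg (not_lt.2 h₁)]
        congr 1
        omega
      · obtain ⟨q, hq⟩ := Nat.exists_eq_add_of_le h₂
        have e₁ : φ x (r + k) = φ (shift^[P + L] x) q := by
          rw [hφ, shift_iterate, hq, add_comm]
        have e₂ : r - (P - (n + 1)) + k = n + 1 + L + q := by omega
        rw [e₁, e₂, (hz x).2.1 q (by omega), hlow _ q (by omega)]
  refine ⟨φ, ?_, hφ, ?_, ?_⟩
  · exact measurable_pi_lambda _ fun j => (hRm _).comp (measurable_shift.iterate _)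
  · intro x i
    have h := hallow (shift^[(P + L) * (i / (P + L))] x) (i % (P + L)) (Nat.mod_lt _ hPL)
    refine (allowedAt_congr fun k _ => ?_).1 h
    rw [hφ', shift_iterate_apply]
    have := Nat.div_add_mod i (P + L)
    congr 1
    omega
  · intro x hx j hj
    rw [hlow x j hj, hbx x hx]

end Correction

/-- A factor map commuting with `shift^[m]` and with values in a shift-invariant set yields a
joining with an invariant measure of that set, by averaging its graph. -/
theorem exists_joining_of_blockCode {Y : Set (ℕ → A)} (hY : MeasurableSet Y)
    (hYs : ∀ x ∈ Y, ∀ k, shift^[k] x ∈ Y) {ν : ProbabilityMeasure (ℕ → A)} (hν : invariantPM ν)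
    {m : ℕ} (hm : 0 < m) {φ : (ℕ → A) → ℕ → A} (hφ : Measurable φ)
    (hφm : ∀ x, φ (shift^[m] x) = shift^[m] (φ x)) (hφY : ∀ x, φ x ∈ Y) :
    ∃ μ ∈ Msigma Y, dbarM μ ν ≤
      (m : ℝ)⁻¹ * ∑ k ∈ Finset.range m, (ν : Measure (ℕ → A)).real {x | φ x k ≠ x k} := by
  have hg : Measurable fun x => (φ x, x) := hφ.prodMk measurable_id
  have hK : Measurable (Prod.map (shift (A := A)) (shift (A := A))) :=
    measurable_shift.prodMap measurable_shift
  set ξ₀ : Measure ((ℕ → A) × (ℕ → A)) := (ν : Measure (ℕ → A)).map fun x => (φ x, x) with hξ₀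
  have : IsProbabilityMeasure ξ₀ := Measure.isProbabilityMeasure_map hg.aemeasurable
  have : IsProbabilityMeasure ((ν : Measure (ℕ → A)).map φ) :=
    Measure.isProbabilityMeasure_map hφ.aemeasurable
  have hinv : ξ₀.map (Prod.map shift shift)^[m] = ξ₀ := by
    rw [hξ₀, Measure.map_map (hK.iterate m) hg]
    conv_rhs => rw [← map_iterate_eq measurable_shift hν m]
    rw [Measure.map_map hg (measurable_shift.iterate m)]
    congr 1
    funext x
    simp [Prod.map_iterate, hφm]
  set ξ := cesaro (Prod.map shift shift) ξ₀ m with hξ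
  have : IsProbabilityMeasure ξ := isProbabilityMeasure_cesaro hK ξ₀ hm
  have hξK : ξ.map (Prod.map shift shift) = ξ := map_cesaro_of_map_iterate_eq hK hinv
  have h₁ : ξ.map Prod.fst = cesaro shift ((ν : Measure (ℕ → A)).map φ) m := by
    rw [hξ, map_cesaro hK measurable_shift measurable_fst (fun _ => rfl), hξ₀,
      Measure.map_map measurable_fst hg]
    rfl
  have h₂ : ξ.map Prod.snd = ν := by
    rw [hξ, map_cesaro hK measurable_shift measurable_snd (fun _ => rfl), hξ₀,
      Measure.map_map measurable_snd hg]
    have : (Prod.snd ∘ fun x : ℕ → A => (φ x, x)) = id := rfl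
    rw [this, Measure.map_id, cesaro_eq_self measurable_shift hν hm]
  let μ : ProbabilityMeasure (ℕ → A) :=
    ⟨ξ.map Prod.fst, Measure.isProbabilityMeasure_map measurable_fst.aemeasurable⟩
  have hμ : invariantPM μ := by
    show (ξ.map Prod.fst).map shift = ξ.map Prod.fst
    conv_rhs => rw [← hξK]
    rw [Measure.map_map measurable_shift measurable_fst, Measure.map_map measurable_fst hK]
    rfl
  have hμY : μ Y = 1 := by
    have : (μ : Measure (ℕ → A)) Y = 1 := by
      show ξ.map Prod.fst Y = 1
      rw [h₁]
      refine cesaro_apply_eq_one measurable_shift _ hm hY fun k => ?_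
      rw [Measure.map_apply hφ (measurable_shift.iterate k hY)]
      convert measure_univ (μ := (ν : Measure (ℕ → A)))
      exact Set.eq_univ_of_forall fun x => hYs _ (hφY x) k
    rw [ProbabilityMeasure.coeFn_def]
    simp [this]
  refine ⟨μ, ⟨hμ, hμY⟩, (dbarM_le ⟨hξK, rfl, h₂⟩).trans_eq ?_⟩
  rw [hξ, cesaro_apply hK _ _ measurableSet_zero_ne, ENNReal.toReal_mul, ENNReal.toReal_inv,
    ENNReal.toReal_natCast, ENNReal.toReal_sum fun k _ => measure_ne_top _ _]
  congr 1
  refine Finset.sum_congr rfl fun k _ => ?_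
  rw [hξ₀, Measure.map_apply hg (hK.iterate k measurableSet_zero_ne)]
  simp [Measure.real, Prod.map_iterate, shift_iterate]

theorem isOpen_setOf_apply_lt {F : Set (ℕ → A)} (hF : IsClopen F) (δ : ℝ) :
    IsOpen {ν : ProbabilityMeasure (ℕ → A) | (ν F : ℝ) < δ} := by
  have hc : Continuous fun ν : ProbabilityMeasure (ℕ → A) => ν F :=
    continuous_iff_continuousAt.2 fun ν =>
      ProbabilityMeasure.tendsto_measure_of_isClopen_of_tendsto tendsto_id hF
  exact isOpen_lt (NNReal.continuous_coe.comp hc) continuous_const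

/-- Invariant measures close to those of `X` are `dbarM`-close to invariant measures of a mixing
Markov approximation of `X`. -/
theorem exists_isOpen_markovApprox {X : Set (ℕ → A)} (hX : ShiftSpace X) (n : ℕ)
    (hmix : MixingShift (markovApprox X n)) {ε : ℝ} (hε : 0 < ε) :
    ∃ U : Set (ProbabilityMeasure (ℕ → A)), IsOpen U ∧ Msigma X ⊆ U ∧
      ∀ ν ∈ U, invariantPM ν → ∃ μ ∈ Msigma (markovApprox X n), dbarM μ ν < ε := by
  obtain ⟨L, hL⟩ := exists_blockCode hX hmix
  obtain ⟨p, hp⟩ := exists_nat_gt (2 * L / ε)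
  obtain ⟨P, hP⟩ : ∃ P, P = n + 1 + p := ⟨_, rfl⟩
  obtain ⟨φ, hφm, hφ, hφY, hφeq⟩ := hL P (by omega)
  have hP0 : (0 : ℝ) < P := by exact_mod_cast (by omega : 0 < P)
  have hLP : 2 * (L : ℝ) < ε * P := by
    have h₁ : (p : ℝ) ≤ P := by exact_mod_cast (by omega : p ≤ P)
    have h₂ := (div_lt_iff₀ hε).1 (hp.trans_le h₁)
    linarith
  let F : Set (ℕ → A) := {x | AllowedAt X n x 0}ᶜ
  have hF : IsClopen F := (isClopen_allowedAt X n 0).compl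
  refine ⟨{ν | (ν F : ℝ) < ε / (2 * P)}, isOpen_setOf_apply_lt hF _, ?_, ?_⟩
  · rintro ν ⟨-, hν⟩
    have h0 : ν F = 0 := by
      rw [ProbabilityMeasure.null_iff_toMeasure_null]
      refine measure_mono_null (t := Xᶜ) (fun x hx hxX => hx (ofFn_mem_lang hxX _ 0)) ?_
      rw [prob_compl_eq_zero_iff hX.2.1.measurableSet,
        ← ProbabilityMeasure.ennreal_coeFn_eq_coeFn_toMeasure, hν, ENNReal.coe_one]
    show (ν F : ℝ) < _
    rw [h0]
    simpa using by positivity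
  · intro ν hνF hν
    obtain ⟨μ, hμ, hle⟩ := exists_joining_of_blockCode (measurableSet_markovApprox X n)
      (fun x hx k => shift_iterate_mem_markovApprox hx k) hν (by omega : 0 < P + L) hφm hφ hφY
    refine ⟨μ, hμ, hle.trans_lt ?_⟩
    set d : ℝ := (ν : Measure (ℕ → A)).real F with hd
    have hdlt : d * (2 * P) < ε := by
      have : d < ε / (2 * P) := hνF
      exact (lt_div_iff₀ (by positivity)).1 this
    have hbad : ∀ k < P, (ν : Measure (ℕ → A)).real {x | φ x k ≠ x k} ≤ P * d := by
      intro k hk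
      have hsub : {x | φ x k ≠ x k} ⊆ ⋃ i ∈ Finset.range P, shift^[i] ⁻¹' F := by
        intro x hx
        by_contra hcon
        simp only [Set.mem_iUnion, not_exists] at hcon
        refine hx (hφeq x (fun i hi => ?_) k hk)
        have h := not_not.1 (hcon i (Finset.mem_range.2 (by omega)))
        refine (allowedAt_congr fun t _ => ?_).1 h
        rw [shift_iterate_apply]
        congr 1
        omega
      refine (measureReal_mono hsub (measure_ne_top _ _)).trans ((measureReal_biUnion_finset_le _ _).trans ?_)
      have hi : ∀ i, (ν : Measure (ℕ → A)).real (shift^[i] ⁻¹' F) = d := fun i => by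
        rw [hd, ← map_measureReal_apply (measurable_shift.iterate i) hF.isOpen.measurableSet,
          map_iterate_eq measurable_shift hν]
      simp [hi]
    have hsum : ∑ k ∈ Finset.range (P + L), (ν : Measure (ℕ → A)).real {x | φ x k ≠ x k}
        ≤ P * (P * d) + L := by
      rw [Finset.sum_range_add]
      refine add_le_add ?_ ?_
      · simpa using Finset.sum_le_card_nsmul (Finset.range P) _ _
          fun k hk => hbad k (Finset.mem_range.1 hk)
      · simpa using Finset.sum_le_card_nsmul (Finset.range L)
          (fun k => (ν : Measure (ℕ → A)).real {x | φ x (P + k) ≠ x (P + k)}) 1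
          fun k _ => measureReal_le_one
    have hPL : (0 : ℝ) < (P + L : ℕ) := by exact_mod_cast (by omega : 0 < P + L)
    rw [inv_mul_lt_iff₀ hPL]
    refine hsum.trans_lt ?_
    have hL0 : (0 : ℝ) ≤ L := Nat.cast_nonneg L
    push_cast
    nlinarith [mul_lt_mul_of_pos_left hdlt hP0, mul_nonneg hε.le hL0]

/-- chain mixing together with `d̄_M^H`-convergence of the simplices of the
Markov approximations implies `d̄_M`-stability. -/
theorem statement5 (hA : 2 ≤ Fintype.card A) (X : Set (ℕ → A)) (hX : ShiftSpace X)
    (hcm : ChainMixing X)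
    (hconv : Filter.Tendsto (fun n => hausdist dbarM (Msigma (markovApprox X n)) (Msigma X))
      Filter.atTop (nhds 0)) :
    DbarMStable X := by
  intro ε hε
  by_cases hne : (Msigma X).Nonempty
  swap
  · exact ⟨∅, isOpen_empty, by rw [Set.not_nonempty_iff_eq_empty.1 hne], by simp⟩
  obtain ⟨N, hN⟩ := hcm
  obtain ⟨n, hn, hnN⟩ := ((hconv.eventually (gt_mem_nhds (half_pos hε))).and
    (eventually_ge_atTop N)).exists
  obtain ⟨U, hU, hXU, hstab⟩ := exists_isOpen_markovApprox hX n (hN n hnN) (half_pos hε)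
  refine ⟨U, hU, hXU, fun ν hν hinv => ?_⟩
  obtain ⟨p, hp, hpν⟩ := hstab ν hν hinv
  obtain ⟨q, hq, hpq⟩ := exists_lt_of_hausdist_lt hne hn hp
  refine ⟨q, hq, ?_⟩
  have := dbarM_lt_add hq.1 hp.1 hinv (dbarM_lt_symm hp.1 hq.1 hpq) hpν
  linarith

end DbarPaper
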